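/- Let H : D → ℝ be symmetric (invariant under every permutation of its three arguments) on D, satisfy the entropy equation H(x,y,z) = H(x+y,0,z) + H(x,y,0) for all (x,y,z) in the interior of D, and suppose the map (x,y) ↦ H(x,y,0) is positively homogeneous of degree 1 on ℝ₊₊² (i.e. H(tx,ty,0) = t·H(x,y,0) for all t,x,y > 0). Then there exists a function φ : ℝ₊₊ → ℝ such that φ(xy) = x·φ(y) + y·φ(x) for all x,y > 0 and H(x,y,z) = φ(x+y+z) − φ(x) − φ(y) − φ(z) for all (x,y,z) in the interior of D. -/

import Mathlib

/-- A symmetric homogeneous additive cocycle on the reals. -/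
structure DCoc where
  F : ℝ → ℝ → ℝ
  comm : ∀ x y, F x y = F y x
  coc : ∀ x y z, F (x + y) z + F x y = F x (y + z) + F y z
  hom : ∀ t x y, F (t * x) (t * y) = t * F x y
  zero : ∀ x, F 0 x = 0
  neg : ∀ x, F (-x) x = 0

/-- The square-zero extension attached to a cocycle. -/
@[ext] structure DE (c : DCoc) where
  a : ℝ
  b : ℝ

namespace DE

variable {c : DCoc}

instance : Add (DE c) := ⟨fun p q => ⟨p.a + q.a, p.b + q.b + c.F p.a q.a⟩⟩
instance : Mul (DE c) := ⟨fun p q => ⟨p.a * q.a, p.a * q.b + q.a * p.b⟩⟩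
instance : Zero (DE c) := ⟨⟨0, 0⟩⟩
instance : One (DE c) := ⟨⟨1, 0⟩⟩
instance : Neg (DE c) := ⟨fun p => ⟨-p.a, -p.b⟩⟩

@[simp] lemma add_a (p q : DE c) : (p + q).a = p.a + q.a := rfl
@[simp] lemma add_b (p q : DE c) : (p + q).b = p.b + q.b + c.F p.a q.a := rfl
@[simp] lemma mul_a (p q : DE c) : (p * q).a = p.a * q.a := rfl
@[simp] lemma mul_b (p q : DE c) : (p * q).b = p.a * q.b + q.a * p.b := rfl
@[simp] lemma zero_a : (0 : DE c).a = 0 := rfl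
@[simp] lemma zero_b : (0 : DE c).b = 0 := rfl
@[simp] lemma one_a : (1 : DE c).a = 1 := rfl
@[simp] lemma one_b : (1 : DE c).b = 0 := rfl
@[simp] lemma neg_a (p : DE c) : (-p).a = -p.a := rfl
@[simp] lemma neg_b (p : DE c) : (-p).b = -p.b := rfl

protected lemma add_comm' (p q : DE c) : p + q = q + p := by
  ext
  · simp [add_comm]
  · simp only [add_b, c.comm p.a q.a]; ring

protected lemma mul_comm' (p q : DE c) : p * q = q * p := by
  ext
  · simp [mul_comm]
  · simp only [mul_b]; ring

protected lemma zero_add' (p : DE c) : 0 + p = p := by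
  ext <;> simp [c.zero]

protected lemma one_mul' (p : DE c) : 1 * p = p := by
  ext <;> simp

protected lemma left_distrib' (p q r : DE c) : p * (q + r) = p * q + p * r := by
  ext
  · simp [mul_add]
  · simp only [mul_b, add_b, add_a, mul_a, c.hom]; ring

protected lemma zero_mul' (p : DE c) : 0 * p = 0 := by
  ext <;> simp

instance : CommRing (DE c) where
  add_assoc p q r := by
    ext
    · simp [add_assoc]
    · have := c.coc p.a q.a r.a
      simp only [add_b, add_a]; linarith
  zero_add := DE.zero_add'
  add_zero p := by rw [DE.add_comm', DE.zero_add']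
  add_comm := DE.add_comm'
  mul_assoc p q r := by
    ext
    · simp [mul_assoc]
    · simp only [mul_b, mul_a]; ring
  one_mul := DE.one_mul'
  mul_one p := by rw [DE.mul_comm', DE.one_mul']
  mul_comm := DE.mul_comm'
  left_distrib := DE.left_distrib'
  right_distrib p q r := by
    rw [DE.mul_comm', DE.left_distrib', DE.mul_comm' r p, DE.mul_comm' r q]
  zero_mul := DE.zero_mul'
  mul_zero p := by rw [DE.mul_comm', DE.zero_mul']
  neg_add_cancel p := by
    ext <;> simp [c.neg]
  nsmul := nsmulRec
  zsmul := zsmulRec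

/-- Projection to the reals. -/
def proj (c : DCoc) : DE c →+* ℝ where
  toFun := DE.a
  map_one' := rfl
  map_zero' := rfl
  map_add' _ _ := rfl
  map_mul' _ _ := rfl

end DE

lemma formallySmooth_int_real : Algebra.FormallySmooth ℤ ℝ := by
  have h1 : Algebra.FormallySmooth ℤ ℚ :=
    Algebra.FormallySmooth.of_isLocalization (nonZeroDivisors ℤ)
  have h2 : Algebra.FormallySmooth ℚ ℝ := by
    obtain ⟨s, hs⟩ := exists_isTranscendenceBasis ℚ ℝ
    have : Algebra.IsAlgebraic (IntermediateField.adjoin ℚ (Set.range ((↑) : s → ℝ))) ℝ :=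
      hs.isAlgebraic_field
    exact .of_algebraicIndependent_of_isSeparable hs.1
  exact Algebra.FormallySmooth.comp ℤ ℚ ℝ

lemma DCoc.split (c : DCoc) : ∃ φ : ℝ → ℝ,
    (∀ x y, φ (x * y) = x * φ y + y * φ x) ∧
    (∀ x y, φ (x + y) = φ x + φ y + c.F x y) := by
  have := formallySmooth_int_real
  let g : DE c →ₐ[ℤ] ℝ := (DE.proj c).toIntAlgHom
  have hg : Function.Surjective g := fun x => ⟨⟨x, 0⟩, rfl⟩
  have hker : IsNilpotent (RingHom.ker (g : DE c →+* ℝ)) := by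
    refine ⟨2, ?_⟩
    rw [pow_two, Ideal.zero_eq_bot, eq_bot_iff, Ideal.mul_le]
    intro p hp q hq
    have hp' : p.a = 0 := hp
    have hq' : q.a = 0 := hq
    rw [Ideal.mem_bot]
    ext <;> simp [hp', hq']
  let σ := Algebra.FormallySmooth.liftOfSurjective (AlgHom.id ℤ ℝ) g hg hker
  have hσ : ∀ x, (σ x).a = x := fun x =>
    Algebra.FormallySmooth.liftOfSurjective_apply (AlgHom.id ℤ ℝ) g hg hker x
  refine ⟨fun x => (σ x).b, fun x y => ?_, fun x y => ?_⟩
  · simp only [map_mul, DE.mul_b, hσ]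
  · simp only [map_add, DE.add_b, hσ]

/-- Symmetric sum of three. -/
def dT (F : ℝ → ℝ → ℝ) (p a z : ℝ) : ℝ := F p a + F (p + a) z

lemma exists_ext (F : ℝ → ℝ → ℝ)
    (comm : ∀ x y, F x y = F y x)
    (coc : ∀ x y z, 0 ≤ x → 0 ≤ y → 0 ≤ z → F (x + y) z + F x y = F x (y + z) + F y z)
    (hom : ∀ t x y, 0 ≤ t → 0 ≤ x → 0 ≤ y → F (t * x) (t * y) = t * F x y)
    (zero : ∀ x, F 0 x = 0) :
    ∃ c : DCoc, ∀ x y, 0 < x → 0 < y → c.F x y = F x y := by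
  have zero' : ∀ x, F x 0 = 0 := fun x => by rw [comm, zero]
  have T1 : ∀ p a z, dT F p a z = dT F a p z := fun p a z => by
    simp only [dT]; rw [comm p a, add_comm p a]
  have T2 : ∀ p a z, 0 ≤ p → 0 ≤ a → 0 ≤ z → dT F p a z = dT F p z a := fun p a z hp ha hz => by
    have h1 := coc p a z hp ha hz
    have h2 := coc p z a hp hz ha
    rw [add_comm z a, comm z a] at h2
    simp only [dT]; linarith
  have exch : ∀ a b c d, 0 ≤ a → 0 ≤ b → 0 ≤ c → 0 ≤ d →
      F a b + F c d + F (a + b) (c + d) = F a c + F b d + F (a + c) (b + d) := by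
    intro a b c d ha hb hc hd
    have h1 := coc (a + b) c d (by positivity) hc hd
    have h2 := coc (a + c) b d (by positivity) hb hd
    have h3 := T2 a b c ha hb hc
    simp only [dT] at h3
    rw [add_right_comm a c b] at h2
    linarith
  let P : ℝ → ℝ := fun x => max x 0
  have hP : ∀ x, 0 ≤ P x := fun x => le_max_right _ _
  have hPP : ∀ x, P x - P (-x) = x := fun x => by
    simp only [P]
    rcases le_total x 0 with h | h
    · rw [max_eq_right h, max_eq_left (by linarith)]; ring
    · rw [max_eq_left h, max_eq_right (by linarith)]; ring
  have hP0 : P 0 = 0 := by simp [P]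
  have hPm : ∀ t x, 0 ≤ t → P (t * x) = t * P x := fun t x ht => by
    simp only [P]; rw [mul_max_of_nonneg _ _ ht, mul_zero]
  have hPpos : ∀ x, 0 < x → P x = x ∧ P (-x) = 0 := fun x hx =>
    ⟨max_eq_left hx.le, max_eq_right (by linarith)⟩
  let G : ℝ → ℝ → ℝ := fun x y =>
    dT F (P (-(x + y))) (P x) (P y) - dT F (P (x + y)) (P (-x)) (P (-y))
  have Gneg : ∀ x y, G (-x) (-y) = - G x y := fun x y => by
    simp only [G, neg_neg]
    rw [show -x + -y = -(x + y) by ring, neg_neg]; ring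
  have Tm : ∀ t p a z, 0 ≤ t → 0 ≤ p → 0 ≤ a → 0 ≤ z →
      dT F (t * p) (t * a) (t * z) = t * dT F p a z := fun t p a z ht hp ha hz => by
    simp only [dT]
    rw [← mul_add, hom t _ _ ht hp ha, hom t _ _ ht (by positivity) hz]; ring
  have Gm : ∀ t x y, 0 ≤ t → G (t * x) (t * y) = t * G x y := fun t x y ht => by
    simp only [G]
    rw [← mul_add, ← mul_neg, ← mul_neg, ← mul_neg]
    simp only [hPm _ _ ht]
    rw [Tm _ _ _ _ ht (hP _) (hP _) (hP _), Tm _ _ _ _ ht (hP _) (hP _) (hP _)]; ring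
  have Gcomm : ∀ x y, G x y = G y x := fun x y => by
    simp only [G]
    rw [T2 _ (P x) _ (hP _) (hP _) (hP _), T2 _ (P (-x)) _ (hP _) (hP _) (hP _), add_comm x y]
  -- the main identity
  let Q : ℝ → ℝ → ℝ → ℝ → ℝ := fun p z x y => F p z + F x y + F (p + z) (x + y)
  have key : ∀ x y z, G (x + y) z + G x y =
      Q (P (-(x + y + z))) (P z) (P x) (P y) - Q (P (x + y + z)) (P (-z)) (P (-x)) (P (-y)) := by
    intro x y z
    have J : ∀ p a z b x y, 0 ≤ p → 0 ≤ a → 0 ≤ z → 0 ≤ b → 0 ≤ x → 0 ≤ y →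
        dT F p a z + dT F b x y = Q p z x y + F a b + F (p + z + (x + y)) (a + b)
          - F (p + z + a) (x + y + b) := by
      intro p a z b x y hp ha hz hb hx hy
      rw [T2 p a z hp ha hz, T1 b x y, T2 x b y hx hb hy]
      have := exch (p + z) a (x + y) b (by positivity) ha (by positivity) hb
      simp only [dT, Q]; linarith
    have j1 := J (P (-(x + y + z))) (P (x + y)) (P z) (P (-(x + y))) (P x) (P y)
      (hP _) (hP _) (hP _) (hP _) (hP _) (hP _)
    have j2 := J (P (x + y + z)) (P (-(x + y))) (P (-z)) (P (x + y)) (P (-x)) (P (-y))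
      (hP _) (hP _) (hP _) (hP _) (hP _) (hP _)
    have e1 := hPP x
    have e2 := hPP y
    have e3 := hPP z
    have e4 := hPP (x + y)
    have e5 := hPP (x + y + z)
    rw [show P (x + y + z) + P (-z) + (P (-x) + P (-y)) =
      P (-(x + y + z)) + P z + (P x + P y) by linarith,
      show P (x + y + z) + P (-z) + P (-(x + y)) =
        P (-(x + y + z)) + P z + P (x + y) by linarith,
      show P (-x) + P (-y) + P (x + y) = P x + P y + P (-(x + y)) by linarith,
      comm (P (-(x + y))) (P (x + y)), add_comm (P (-(x + y))) (P (x + y))] at j2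
    simp only [G]; linarith
  have Qs : ∀ p z x y, 0 ≤ p → 0 ≤ z → 0 ≤ x → 0 ≤ y → Q p z x y = Q p x y z := by
    intro p z x y hp hz hx hy
    have := exch p z x y hp hz hx hy
    simp only [Q]
    rw [this, comm z y, add_comm z y]
  refine ⟨⟨G, Gcomm, ?_, ?_, ?_, ?_⟩, ?_⟩
  · intro x y z
    rw [Gcomm x (y + z), key, key y z x, show y + z + x = x + y + z by ring]
    rw [Qs _ _ _ _ (hP _) (hP _) (hP _) (hP _), Qs _ (P (-z)) _ _ (hP _) (hP _) (hP _) (hP _)]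
  · intro t x y
    rcases le_total 0 t with h | h
    · exact Gm t x y h
    · have h1 := Gm (-t) x y (by linarith)
      have h2 := Gneg (t * x) (t * y)
      rw [← neg_mul, ← neg_mul, h1] at h2
      linarith
  · intro x
    simp [G, dT, zero, zero', hP0, comm]
  · intro x
    simp only [G, dT, neg_add_cancel, neg_neg, neg_zero, hP0, zero, zero_add, zero_add]
    rw [comm]; ring
  · intro x y hx hy
    obtain ⟨a1, a2⟩ := hPpos x hx
    obtain ⟨b1, b2⟩ := hPpos y hy
    obtain ⟨c1, c2⟩ := hPpos (x + y) (by positivity)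
    simp only [G, dT, a1, a2, b1, b2, c1, c2, zero, zero', zero_add, add_zero, sub_zero]

/-- Daróczy's theorem: if `H` is symmetric on `D`, satisfies the entropy equation
on the interior of `D`, and `(x,y) ↦ H(x,y,0)` is positively homogeneous of degree 1
on `ℝ₊₊²`, then `H(x,y,z) = φ(x+y+z) − φ(x) − φ(y) − φ(z)` on the interior of `D`,
where `φ(xy) = x·φ(y) + y·φ(x)` for all `x, y > 0`. -/
theorem daroczy_entropy_equation
    (H : ℝ → ℝ → ℝ → ℝ)
    (hsym : ∀ x y z : ℝ, 0 ≤ x → 0 ≤ y → 0 ≤ z → 0 < x + y + z →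
      ∀ σ : Equiv.Perm (Fin 3),
        H x y z = H (![x, y, z] (σ 0)) (![x, y, z] (σ 1)) (![x, y, z] (σ 2)))
    (heq : ∀ x y z : ℝ, 0 < x → 0 < y → 0 < z →
      H x y z = H (x + y) 0 z + H x y 0)
    (hhom : ∀ t x y : ℝ, 0 < t → 0 < x → 0 < y →
      H (t * x) (t * y) 0 = t * H x y 0) :
    ∃ φ : ℝ → ℝ,
      (∀ x y : ℝ, 0 < x → 0 < y → φ (x * y) = x * φ y + y * φ x) ∧
      (∀ x y z : ℝ, 0 < x → 0 < y → 0 < z →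
        H x y z = φ (x + y + z) - φ x - φ y - φ z) := by
  classical
  have s01 : ∀ x y z : ℝ, 0 ≤ x → 0 ≤ y → 0 ≤ z → 0 < x + y + z → H x y z = H y x z := by
    intro x y z hx hy hz h
    have e : (Equiv.swap (0 : Fin 3) 1) 2 = 2 := by decide
    simpa [e] using hsym x y z hx hy hz h (Equiv.swap 0 1)
  have s12 : ∀ x y z : ℝ, 0 ≤ x → 0 ≤ y → 0 ≤ z → 0 < x + y + z → H x y z = H x z y := by
    intro x y z hx hy hz h
    have e : (Equiv.swap (1 : Fin 3) 2) 0 = 0 := by decide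
    simpa [e] using hsym x y z hx hy hz h (Equiv.swap 1 2)
  have heq' : ∀ x y z : ℝ, 0 < x → 0 < y → 0 < z →
      H x y z = H (x + y) z 0 + H x y 0 := by
    intro x y z hx hy hz
    rw [heq x y z hx hy hz, s12 (x + y) 0 z (by positivity) le_rfl hz.le (by positivity)]
  let F : ℝ → ℝ → ℝ := fun x y => if 0 < x ∧ 0 < y then H x y 0 else 0
  have Fp : ∀ x y, 0 < x → 0 < y → F x y = H x y 0 := fun x y hx hy => if_pos ⟨hx, hy⟩
  have F0 : ∀ x, F 0 x = 0 := fun x => if_neg (by simp)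
  have F0' : ∀ x, F x 0 = 0 := fun x => if_neg (by simp)
  have Fc : ∀ x y, F x y = F y x := by
    intro x y
    by_cases h : 0 < x ∧ 0 < y
    · rw [Fp _ _ h.1 h.2, Fp _ _ h.2 h.1]
      exact s01 x y 0 h.1.le h.2.le le_rfl (by linarith [h.1, h.2])
    · simp only [F]
      rw [if_neg h, if_neg (fun h' => h h'.symm)]
  obtain ⟨c, hc⟩ := exists_ext F Fc (by
    intro x y z hx hy hz
    rcases hx.eq_or_lt with rfl | hx
    · simp [F0]
    rcases hy.eq_or_lt with rfl | hy
    · simp [F0, F0']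
    rcases hz.eq_or_lt with rfl | hz
    · simp [F0']
    rw [Fc x (y + z), Fp _ _ (by positivity) hz, Fp _ _ hx hy, Fp _ _ (by positivity) hx,
      Fp _ _ hy hz, ← heq' x y z hx hy hz, ← heq' y z x hy hz hx,
      s01 x y z hx.le hy.le hz.le (by positivity), s12 y x z hy.le hx.le hz.le (by positivity)])
    (by
    intro t x y ht hx hy
    rcases ht.eq_or_lt with rfl | ht
    · simp [F0]
    rcases hx.eq_or_lt with rfl | hx
    · simp [F0]
    rcases hy.eq_or_lt with rfl | hy
    · simp [F0']
    rw [Fp _ _ (by positivity) (by positivity), Fp _ _ hx hy, hhom t x y ht hx hy]) F0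
  obtain ⟨φ, h1, h2⟩ := c.split
  refine ⟨φ, fun x y _ _ => h1 x y, fun x y z hx hy hz => ?_⟩
  rw [h2 (x + y) z, h2 x y, hc _ _ (by positivity) hz, hc _ _ hx hy,
    Fp _ _ (by positivity) hz, Fp _ _ hx hy, heq' x y z hx hy hz]
  ring
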